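/- arXiv:math/9409203 — 4 statements merged into one kernel-verified Lean document; each statement's English description precedes it below -/
import Mathlib

section
/- Let P be an atomless ℵ₀-distributive partial order of cardinality ℵ₁. Then there exists a family ⟨A_α : α < ω₁⟩ of subsets of P such that: (i) each A_α is a maximal antichain of P; (ii) for all β < α < ω₁, every element of A_α lies strictly below exactly one element of A_β; and (iii) the union ⋃_{α<ω₁} A_α is dense in P. (Hence T = ⋃_{α<ω₁} A_α, equipped with the reversed order, is a normal tree of height ω₁ that is dense in P.) -/
/-!
Enumerate a dense set of conditions as `⟨e α : α < ω₁⟩` and choose the levels `A α` by transfinite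
recursion. For a maximal antichain `A β`, the conditions strictly below a member of `A β` form a
dense open set, because every condition of an atomless order has a strict extension. At a countable
stage `α`, distributivity makes the intersection of these sets over `β < α` dense, so it contains a
maximal antichain `A α` of `P`, which can be chosen to have a member below `e α`. This last
requirement makes the union of the levels dense.
-/

/- Forcing conventions: `q ≤ p` means `q` is stronger than `p`. -/

/-- `D` is dense in `P`: every condition has an extension in `D`. -/
def FDense {P : Type*} [Preorder P] (D : Set P) : Prop :=
  ∀ p : P, ∃ d ∈ D, d ≤ p

/-- `D` is open in `P`: downward closed. -/
def FOpen {P : Type*} [Preorder P] (D : Set P) : Prop :=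
  ∀ p ∈ D, ∀ q : P, q ≤ p → q ∈ D

/-- Two conditions are compatible if they have a common extension. -/
def Compat {P : Type*} [Preorder P] (p q : P) : Prop :=
  ∃ r : P, r ≤ p ∧ r ≤ q

/-- An antichain: a set of pairwise incompatible conditions. -/
def FAntichain {P : Type*} [Preorder P] (A : Set P) : Prop :=
  ∀ p ∈ A, ∀ q ∈ A, p ≠ q → ¬Compat p q

/-- A maximal antichain: an antichain such that every condition is
compatible with some member. -/
def MaxAntichain {P : Type*} [Preorder P] (A : Set P) : Prop :=
  FAntichain A ∧ ∀ p : P, ∃ a ∈ A, Compat p a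

/-- `P` is ℵ₀-distributive: the intersection of countably many dense open
sets is dense. -/
def Distributive (P : Type*) [Preorder P] : Prop :=
  ∀ D : ℕ → Set P, (∀ n, FOpen (D n) ∧ FDense (D n)) → FDense (⋂ n, D n)

/-- `P` is atomless: below every condition there are two incompatible
conditions. -/
def AtomlessOrder (P : Type*) [Preorder P] : Prop :=
  ∀ p : P, ∃ q r : P, q ≤ p ∧ r ≤ p ∧ ¬Compat q r

/-- The first uncountable ordinal. -/
noncomputable def omega1 : Ordinal := (Cardinal.aleph 1).ord

universe u v

/-- Distributivity below an ordinal `κ`: for every `α < κ`, the intersection of dense open sets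
indexed by the ordinals below `α` is dense. The case `κ = ω₁` is ℵ₀-distributivity; for an
infinite cardinal `μ`, the case `κ = μ⁺` is `μ`-distributivity. -/
def DistributiveBelow (κ : Ordinal.{v}) (P : Type*) [Preorder P] : Prop :=
  ∀ α < κ, ∀ D : Set.Iio α → Set P, (∀ β, FOpen (D β) ∧ FDense (D β)) → FDense (⋂ β, D β)

/-- The conditions strictly below some member of `A`. An antichain `B` refines `A` strictly, as a
higher level of the tree refines a lower one, when `B ⊆ strictLowerClosure A`. -/
def strictLowerClosure {P : Type*} [Preorder P] (A : Set P) : Set P :=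
  {q | ∃ a ∈ A, q < a}

section Preorder

variable {P : Type*} [Preorder P] {A D : Set P}

theorem FDense.univ : FDense (Set.univ : Set P) := fun p => ⟨p, Set.mem_univ p, le_rfl⟩

theorem Compat.refl (p : P) : Compat p p := ⟨p, le_rfl, le_rfl⟩

theorem Compat.symm {p q : P} : Compat p q → Compat q p := fun ⟨r, hp, hq⟩ => ⟨r, hq, hp⟩

theorem Compat.mono_left {p p' q : P} (hp : p ≤ p') : Compat p q → Compat p' q :=
  fun ⟨r, hrp, hrq⟩ => ⟨r, hrp.trans hp, hrq⟩

theorem FAntichain.singleton (p : P) : FAntichain {p} := Set.pairwise_singleton p _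

theorem FAntichain.insert (hA : FAntichain A) {p : P} (hp : ∀ a ∈ A, ¬Compat p a) :
    FAntichain (insert p A) :=
  Set.Pairwise.insert hA fun a ha _ => ⟨hp a ha, fun h => hp a ha h.symm⟩

theorem FAntichain.eq_of_compat (hA : FAntichain A) {p q : P} (hp : p ∈ A) (hq : q ∈ A)
    (h : Compat p q) : p = q :=
  by_contra fun hne => hA p hp q hq hne h

theorem FAntichain.existsUnique_gt (hA : FAntichain A) {p : P} (hp : p ∈ strictLowerClosure A) :
    ∃! a, a ∈ A ∧ p < a := by
  obtain ⟨a, ha, hpa⟩ := hp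
  exact ⟨a, ⟨ha, hpa⟩, fun b ⟨hb, hpb⟩ => hA.eq_of_compat hb ha ⟨p, hpb.le, hpa.le⟩⟩

theorem MaxAntichain.of_maximal (hD : FDense D)
    (hA : Maximal (fun B => FAntichain B ∧ B ⊆ D) A) : MaxAntichain A := by
  refine ⟨hA.prop.1, fun p => ?_⟩
  obtain ⟨d, hdD, hdp⟩ := hD p
  suffices h : ∃ a ∈ A, Compat d a from h.imp fun a ⟨ha, hda⟩ => ⟨ha, hda.mono_left hdp⟩
  by_contra! hincompat
  have hdA : d ∈ A := hA.mem_of_prop_insert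
    ⟨hA.prop.1.insert hincompat, Set.insert_subset hdD hA.prop.2⟩
  exact hincompat d hdA (Compat.refl d)

theorem FAntichain.exists_maxAntichain_between {s : Set P} (hs : FAntichain s) (hD : FDense D)
    (hsD : s ⊆ D) : ∃ A, MaxAntichain A ∧ s ⊆ A ∧ A ⊆ D := by
  obtain ⟨A, hsA, hA⟩ := zorn_subset_nonempty {B | FAntichain B ∧ B ⊆ D}
    (fun c hc hchain _ => ⟨⋃₀ c,
      ⟨(Set.pairwise_sUnion hchain.directedOn).2 fun B hB => (hc hB).1,
        Set.sUnion_subset fun B hB => (hc hB).2⟩,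
      fun B hB => Set.subset_sUnion_of_mem hB⟩)
    s ⟨hs, hsD⟩
  exact ⟨A, .of_maximal hD hA, hsA, hA.prop.2⟩

theorem FDense.exists_maxAntichain_subset_le (hD : FDense D) (p : P) :
    ∃ A, MaxAntichain A ∧ A ⊆ D ∧ ∃ a ∈ A, a ≤ p := by
  obtain ⟨d, hdD, hdp⟩ := hD p
  obtain ⟨A, hA, hdA, hAD⟩ :=
    (FAntichain.singleton d).exists_maxAntichain_between hD (Set.singleton_subset_iff.2 hdD)
  exact ⟨A, hA, hAD, d, hdA rfl, hdp⟩

theorem AtomlessOrder.exists_lt (hP : AtomlessOrder P) (p : P) : ∃ q, q < p := by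
  by_contra! hmin
  obtain ⟨q, r, hq, hr, hqr⟩ := hP p
  have le_of_le {s : P} (hs : s ≤ p) : p ≤ s := by_contra fun h => hmin s (lt_of_le_not_ge hs h)
  exact hqr ⟨p, le_of_le hq, le_of_le hr⟩

theorem fOpen_strictLowerClosure (A : Set P) : FOpen (strictLowerClosure A) :=
  fun _ ⟨a, ha, hpa⟩ _ hqp => ⟨a, ha, hqp.trans_lt hpa⟩

theorem MaxAntichain.fDense_strictLowerClosure (hP : AtomlessOrder P) (hA : MaxAntichain A) :
    FDense (strictLowerClosure A) := fun p => by
  obtain ⟨a, ha, r, hrp, hra⟩ := hA.2 p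
  obtain ⟨q, hqr⟩ := hP.exists_lt r
  exact ⟨q, ⟨a, ha, hqr.trans_le hra⟩, hqr.le.trans hrp⟩

theorem Distributive.fDense_iInter (hP : Distributive P) {ι : Type*} [Countable ι] {D : ι → Set P}
    (hD : ∀ i, FOpen (D i) ∧ FDense (D i)) : FDense (⋂ i, D i) := by
  cases isEmpty_or_nonempty ι
  · rw [Set.iInter_of_empty]
    exact FDense.univ
  · obtain ⟨f, hf⟩ := exists_surjective_nat ι
    rw [← hf.iInter_comp]
    exact hP (fun n => D (f n)) fun n => hD (f n)

end Preorder

theorem countable_Iio_of_lt_omega1 {α : Ordinal} (hα : α < omega1) : Countable (Set.Iio α) := by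
  have hcard : α.card < Order.succ Cardinal.aleph0 :=
    Cardinal.succ_aleph0 ▸ Cardinal.lt_ord.1 hα
  rw [← Cardinal.mk_le_aleph0_iff, Cardinal.mk_Iio_ordinal, Cardinal.lift_le_aleph0]
  exact Order.lt_succ_iff.1 hcard

theorem Distributive.distributiveBelow_omega1 {P : Type*} [Preorder P] (hP : Distributive P) :
    DistributiveBelow omega1.{v} P := fun _ hα _ hD =>
  have := countable_Iio_of_lt_omega1 hα
  hP.fDense_iInter hD

theorem exists_subset_image_Iio {P : Type u} [Nonempty P] {D : Set P} {κ : Ordinal.{v}}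
    (hD : Cardinal.lift.{v} (Cardinal.mk D) ≤ Cardinal.lift.{u} κ.card) :
    ∃ e : Ordinal.{v} → P, D ⊆ e '' Set.Iio κ := by
  have hlift : Cardinal.lift.{v + 1} (Cardinal.mk D) ≤
      Cardinal.lift.{u} (Cardinal.mk (Set.Iio κ)) := by
    rw [Cardinal.mk_Iio_ordinal]
    simpa using Cardinal.lift_le.{v + 1}.2 hD
  obtain ⟨f⟩ := Cardinal.lift_mk_le'.1 hlift
  have hf : Function.Injective fun d => (f d : Ordinal) := Subtype.val_injective.comp f.injective
  exact ⟨Function.extend (fun d => (f d : Ordinal)) Subtype.val fun _ => Classical.arbitrary P,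
    fun d hd => ⟨f ⟨d, hd⟩, (f ⟨d, hd⟩).2, hf.extend_apply _ _ _⟩⟩

theorem exists_forall_rel_of_forall_exists {ι β : Type*} [Preorder ι] [WellFoundedLT ι]
    {r : (i : ι) → (Set.Iio i → β) → β → Prop} (h : ∀ i f, ∃ b, r i f b) :
    ∃ F : ι → β, ∀ i, r i (fun j => F j) (F i) := by
  choose next hnext using h
  refine ⟨WellFoundedLT.fix fun i F => next i fun j => F j j.2, fun i => ?_⟩
  rw [WellFoundedLT.fix_eq]
  exact hnext i _

theorem exists_strictlyRefining_maxAntichains {P : Type*} [Preorder P] {κ : Ordinal.{v}}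
    (hatomless : AtomlessOrder P) (hdistr : DistributiveBelow κ P) (e : Ordinal.{v} → P) :
    ∃ A : Ordinal.{v} → Set P, ∀ α < κ, MaxAntichain (A α) ∧
      (∀ β < α, A α ⊆ strictLowerClosure (A β)) ∧ ∃ a ∈ A α, a ≤ e α := by
  have hstep (α : Ordinal.{v}) (B : Set.Iio α → Set P) :
      ∃ S, α < κ → (∀ β, MaxAntichain (B β)) →
        MaxAntichain S ∧ S ⊆ ⋂ β, strictLowerClosure (B β) ∧ ∃ a ∈ S, a ≤ e α := by
    by_cases h : α < κ ∧ ∀ β, MaxAntichain (B β)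
    · have hdense : FDense (⋂ β, strictLowerClosure (B β)) := hdistr α h.1 _ fun β =>
        ⟨fOpen_strictLowerClosure (B β), (h.2 β).fDense_strictLowerClosure hatomless⟩
      exact (hdense.exists_maxAntichain_subset_le (e α)).imp fun S hS _ _ => hS
    · exact ⟨∅, fun hα hB => (h ⟨hα, hB⟩).elim⟩
  obtain ⟨A, hA⟩ := exists_forall_rel_of_forall_exists hstep
  have hmax (α : Ordinal.{v}) (hα : α < κ) : MaxAntichain (A α) := by
    induction α using WellFoundedLT.induction with
    | ind α ih => exact (hA α hα fun β => ih β β.2 (β.2.trans hα)).1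
  refine ⟨A, fun α hα => ⟨hmax α hα, ?_⟩⟩
  obtain ⟨-, hrefines, hbelow⟩ := hA α hα fun β => hmax β (β.2.trans hα)
  exact ⟨fun β hβ => Set.subset_iInter_iff.1 hrefines ⟨β, hβ⟩, hbelow⟩

theorem small_distributive_has_dense_normal_tree_general
    {P : Type u} [Preorder P] {D : Set P} {κ : Ordinal.{v}} (hdense : FDense D)
    (hcard : Cardinal.lift.{v} (Cardinal.mk D) ≤ Cardinal.lift.{u} κ.card)
    (hatomless : AtomlessOrder P) (hdistr : DistributiveBelow κ P) :
    ∃ A : Ordinal.{v} → Set P,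
      (∀ α < κ, MaxAntichain (A α)) ∧
      (∀ β α : Ordinal, β < α → α < κ → ∀ a ∈ A α, ∃! b, b ∈ A β ∧ a < b) ∧
      FDense {p : P | ∃ α < κ, p ∈ A α} := by
  rcases isEmpty_or_nonempty P with hP | hP
  · exact ⟨fun _ => ∅, fun _ _ => ⟨isEmptyElim, isEmptyElim⟩, fun _ _ _ _ => isEmptyElim,
      isEmptyElim⟩
  obtain ⟨e, he⟩ := exists_subset_image_Iio hcard
  obtain ⟨A, hA⟩ := exists_strictlyRefining_maxAntichains hatomless hdistr e
  refine ⟨A, fun α hα => (hA α hα).1, fun β α hβα hα a ha => ?_, fun p => ?_⟩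
  · exact (hA β (hβα.trans hα)).1.1.existsUnique_gt ((hA α hα).2.1 β hβα ha)
  · obtain ⟨d, hdD, hdp⟩ := hdense p
    obtain ⟨α, hα, rfl⟩ := he hdD
    obtain ⟨a, haA, had⟩ := (hA α hα).2.2
    exact ⟨a, ⟨α, hα, haA⟩, had.trans hdp⟩

/-- An atomless ℵ₀-distributive partial order of size ℵ₁ carries a family
`⟨A_α : α < ω₁⟩` of maximal antichains, each refining the previous ones
(every element of `A_α` lies strictly below exactly one element of `A_β`
for `β < α`), whose union is dense in `P`; i.e. it has a dense normal tree
of height `ω₁`. -/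
theorem small_distributive_has_dense_normal_tree
    {P : Type*} [PartialOrder P]
    (hcard : Cardinal.mk P = Cardinal.aleph 1)
    (hatomless : AtomlessOrder P)
    (hdistr : Distributive P) :
    ∃ A : Ordinal → Set P,
      (∀ α < omega1, MaxAntichain (A α)) ∧
      (∀ β α : Ordinal, β < α → α < omega1 →
        ∀ a ∈ A α, ∃! b, b ∈ A β ∧ a < b) ∧
      FDense {p : P | ∃ α < omega1, p ∈ A α} :=
  small_distributive_has_dense_normal_tree_general FDense.univ (by simp [hcard, omega1]) hatomless
    hdistr.distributiveBelow_omega1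
end

section
/- Let T be a tree of height ω₁. Let Q₁ be the set of pairs ⟨s, A⟩ where s is a countable subset of T and A is a countable set of cofinal branches of T, ordered by: ⟨s₀, A₀⟩ ≥ ⟨s₁, A₁⟩ if and only if s₀ ⊆ s₁, A₀ ⊆ A₁, and b ∩ s₁ ⊆ s₀ for every b ∈ A₀. Then this relation is a partial order on Q₁, and Q₁ is σ-closed: every decreasing ω-sequence ⟨q_n : n < ω⟩ of elements of Q₁ has a lower bound in Q₁. -/
/-- `(T, ≤)` is a (set-theoretic) tree: the set of strict predecessors of
every node is well-ordered by the order of `T`. -/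
def IsSetTree (T : Type*) [PartialOrder T] : Prop :=
  ∀ t : T, IsWellOrder {s : T // s < t} (fun a b => a.1 < b.1)

/-- The level of a node of a tree: the order type of its set of strict
predecessors. -/
noncomputable def level {T : Type*} [PartialOrder T] (h : IsSetTree T) (t : T) :
    Ordinal :=
  @Ordinal.type {s : T // s < t} (fun a b => a.1 < b.1) (h t)

/-- The tree `T` has height `ω₁`: every node has countable level and there
are nodes of every level `α < ω₁`. -/
def HasHeightOmega1 {T : Type*} [PartialOrder T] (h : IsSetTree T) : Prop :=
  (∀ t : T, level h t < omega1) ∧ ∀ α < omega1, ∃ t : T, level h t = α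

/-- A cofinal branch of `T`: a maximal chain containing nodes of every
level `α < ω₁`. -/
def CofinalBranch {T : Type*} [PartialOrder T] (h : IsSetTree T) (b : Set T) :
    Prop :=
  IsMaxChain (· ≤ ·) b ∧ ∀ α < omega1, ∃ t ∈ b, level h t = α

/-- The underlying set of the forcing `Q₁`: pairs `⟨s, A⟩` where `s` is a
countable subset of `T` and `A` is a countable set of cofinal branches of
`T`. -/
def Q1 {T : Type*} [PartialOrder T] (h : IsSetTree T) :
    Set (Set T × Set (Set T)) :=
  {q | q.1.Countable ∧ q.2.Countable ∧ ∀ b ∈ q.2, CofinalBranch h b}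

/-- The order on `Q₁`: `⟨s₁, A₁⟩` is stronger than (below) `⟨s₀, A₀⟩` iff
`s₀ ⊆ s₁`, `A₀ ⊆ A₁` and `b ∩ s₁ ⊆ s₀` for every `b ∈ A₀`. -/
def Q1le {T : Type*} (q₁ q₀ : Set T × Set (Set T)) : Prop :=
  q₀.1 ⊆ q₁.1 ∧ q₀.2 ⊆ q₁.2 ∧ ∀ b ∈ q₀.2, b ∩ q₁.1 ⊆ q₀.1

namespace Q1le

variable {T : Type*}

instance isPartialOrder : IsPartialOrder (Set T × Set (Set T)) Q1le where
  refl _ := ⟨subset_rfl, subset_rfl, fun _ _ => Set.inter_subset_right⟩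
  trans _ _ _ := fun ⟨hs, hA, hb⟩ ⟨hs', hA', hb'⟩ =>
    ⟨hs'.trans hs, hA'.trans hA, fun b hbA =>
      (Set.subset_inter Set.inter_subset_left (hb b (hA' hbA))).trans (hb' b hbA)⟩
  antisymm _ _ := fun ⟨hs, hA, _⟩ ⟨hs', hA', _⟩ =>
    Prod.ext (hs'.antisymm hs) (hA'.antisymm hA)

theorem iUnion_of_directed {ι : Sort*} {q : ι → Set T × Set (Set T)}
    (hq : Directed (Function.swap Q1le) q) (i : ι) :
    Q1le (⋃ j, (q j).1, ⋃ j, (q j).2) (q i) := by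
  refine ⟨Set.subset_iUnion (fun j => (q j).1) i, Set.subset_iUnion (fun j => (q j).2) i, ?_⟩
  rintro b hb x ⟨hxb, hx⟩
  obtain ⟨j, hxj⟩ := Set.mem_iUnion.1 hx
  obtain ⟨k, ⟨-, -, hki⟩, ⟨hjk, -, -⟩⟩ := hq i j
  exact hki b hb ⟨hxb, hjk hxj⟩

end Q1le

/-- The conditions of the forcing that adds a subset of `T` by countable approximations `s` together
with countable sets `A` of promises taken from `𝓑`: stronger conditions add no new points of the
members of `A`. `Q1 h` is the case where `𝓑` is the set of cofinal branches. -/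
def promiseConditions {T : Type*} (𝓑 : Set (Set T)) : Set (Set T × Set (Set T)) :=
  {q | q.1.Countable ∧ q.2.Countable ∧ q.2 ⊆ 𝓑}

theorem iUnion_mem_promiseConditions {T : Type*} {𝓑 : Set (Set T)} {ι : Sort*} [Countable ι]
    {q : ι → Set T × Set (Set T)} (hq : ∀ i, q i ∈ promiseConditions 𝓑) :
    (⋃ i, (q i).1, ⋃ i, (q i).2) ∈ promiseConditions 𝓑 :=
  ⟨Set.countable_iUnion fun i => (hq i).1, Set.countable_iUnion fun i => (hq i).2.1,
    Set.iUnion_subset fun i => (hq i).2.2⟩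

theorem Q1_partialOrder_and_sigma_closed_general {T : Type*} (𝓑 : Set (Set T)) :
    IsPartialOrder (promiseConditions 𝓑) (fun q₁ q₀ => Q1le q₁.1 q₀.1) ∧
    ∀ {ι : Sort*} [Countable ι] (q : ι → promiseConditions 𝓑),
      Directed (Function.swap Q1le) (fun i => (q i).1) →
        ∃ r : promiseConditions 𝓑, ∀ i, Q1le r.1 (q i).1 :=
  ⟨(Subrel.relEmbedding Q1le (· ∈ promiseConditions 𝓑)).isPartialOrder,
    fun q hq => ⟨⟨_, iUnion_mem_promiseConditions fun i => (q i).2⟩, Q1le.iUnion_of_directed hq⟩⟩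

/-- The relation `Q1le` is a partial order on `Q₁`, and `Q₁` is σ-closed:
every decreasing ω-sequence of conditions has a lower bound. -/
theorem Q1_partialOrder_and_sigma_closed
    {T : Type*} [PartialOrder T]
    (h : IsSetTree T) (hht : HasHeightOmega1 h) :
    IsPartialOrder (Q1 h) (fun q₁ q₀ => Q1le q₁.1 q₀.1) ∧
    ∀ q : ℕ → Q1 h, (∀ m n : ℕ, m ≤ n → Q1le (q n).1 (q m).1) →
      ∃ r : Q1 h, ∀ n : ℕ, Q1le r.1 (q n).1 :=
  have ⟨hpo, hlower⟩ := Q1_partialOrder_and_sigma_closed_general {b | CofinalBranch h b}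
  ⟨hpo, fun q hq => hlower q (directed_of_isDirected_le hq)⟩
end

section
/- Let C and E be countable sets and P an arbitrary set. Let Q be a partial order whose underlying set is a set of pairs ⟨f, g⟩ where f ∈ C and g is a function from a finite subset of P into E, and suppose that whenever ⟨f, g₀⟩ and ⟨f, g₁⟩ both belong to Q and g₀ and g₁ agree on dom(g₀) ∩ dom(g₁), the conditions ⟨f, g₀⟩ and ⟨f, g₁⟩ are compatible in Q. Then Q has the Knaster property: every uncountable subset of Q contains an uncountable subset whose elements are pairwise compatible. In particular, Q has no uncountable antichain (Q is c.c.c.). -/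
/-!
By the pigeonhole principle, uncountably many conditions share the same first coordinate. By the
Δ-system lemma, uncountably many of these have second coordinates whose domains pairwise meet in one
finite root `R`. As `E` is countable, there are only countably many functions from `R` to `E`, so
uncountably many of those second coordinates coincide on `R`; any two of these agree on the
intersection of their domains.

The Δ-system lemma goes by induction on the common size of the sets. If every point lies in only
countably many of the sets, then a maximal pairwise disjoint subfamily is uncountable. Otherwise
some point lies in uncountably many of them and is removed from these.
-/

section UncountableFamilies

variable {ι κ α β : Type*}

theorem exists_not_countable_fiber [Countable κ] {S : Set ι} (hS : ¬S.Countable) (f : ι → κ) :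
    ∃ k, ¬{i ∈ S | f i = k}.Countable := by
  contrapose! hS
  refine (Set.countable_iUnion hS).mono fun i hi => ?_
  exact Set.mem_iUnion.2 ⟨f i, hi, rfl⟩

theorem exists_maximal_pairwise (r : ι → ι → Prop) (S : Set ι) :
    ∃ M, Maximal (fun T => T ⊆ S ∧ T.Pairwise r) M := by
  refine zorn_subset {T | T ⊆ S ∧ T.Pairwise r} fun c hc hchain =>
    ⟨⋃₀ c, ⟨?_, ?_⟩, fun _ hT => Set.subset_sUnion_of_mem hT⟩
  · exact Set.sUnion_subset fun _ hT => (hc hT).1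
  · exact (Set.pairwise_sUnion hchain.directedOn).2 fun _ hT => (hc hT).2

theorem exists_not_countable_pairwise {r : ι → ι → Prop} [Std.Symm r] {S : Set ι}
    (hS : ¬S.Countable) (hr : ∀ i ∈ S, {j ∈ S | ¬r i j}.Countable) :
    ∃ S' ⊆ S, ¬S'.Countable ∧ S'.Pairwise r := by
  obtain ⟨M, hM⟩ := exists_maximal_pairwise r S
  refine ⟨M, hM.prop.1, fun hMc => hS ?_, hM.prop.2⟩
  have hcover : S ⊆ M ∪ ⋃ i ∈ M, {j ∈ S | ¬r i j} := by
    intro j hj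
    by_contra! hnot
    simp only [Set.mem_union, Set.mem_iUnion, Set.mem_sep_iff, not_or, not_exists, not_and,
      not_not] at hnot
    obtain ⟨hjM, hrel⟩ := hnot
    have hinsert : (insert j M).Pairwise r :=
      hM.prop.2.insert_of_symm fun i hi _ => symm (hrel i hi hj)
    exact hjM (hM.mem_of_prop_insert ⟨Set.insert_subset hj hM.prop.1, hinsert⟩)
  exact (hMc.union (hMc.biUnion fun i hi => hr i (hM.prop.1 hi))).mono hcover

/-- The sets `s i` with `i ∈ S` form a Δ-system with root `R`: any two with different indices
meet in `R`. The family is indexed, so the same set may occur at several indices. -/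
def IsDeltaSystem (s : ι → Set α) (S : Set ι) (R : Set α) : Prop :=
  S.Pairwise fun i j => s i ∩ s j = R

theorem IsDeltaSystem.insert_root {s : ι → Set α} {S : Set ι} {R : Set α} {p : α}
    (h : IsDeltaSystem (fun i => s i \ {p}) S R) (hp : ∀ i ∈ S, p ∈ s i) :
    IsDeltaSystem s S (insert p R) := by
  intro i hi j hj hij
  rw [← h hi hj hij, Set.insert_inter_distrib, Set.insert_sdiff_self_of_mem (hp i hi),
    Set.insert_sdiff_self_of_mem (hp j hj)]

theorem exists_not_countable_pairwise_disjoint {s : ι → Set α} {S : Set ι} (hS : ¬S.Countable)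
    (hs : ∀ i ∈ S, (s i).Countable) (hpt : ∀ p, {i ∈ S | p ∈ s i}.Countable) :
    ∃ S' ⊆ S, ¬S'.Countable ∧ S'.PairwiseDisjoint s := by
  have : Std.Symm (Function.onFun Disjoint s) := inferInstance
  refine exists_not_countable_pairwise hS fun i hi => ?_
  refine ((hs i hi).biUnion fun p _ => hpt p).mono fun j ⟨hj, hmeet⟩ => ?_
  obtain ⟨p, hpi, hpj⟩ := Set.not_disjoint_iff.1 hmeet
  exact Set.mem_biUnion hpi ⟨hj, hpj⟩

theorem exists_isDeltaSystem_of_encard_eq (n : ℕ) {s : ι → Set α} {S : Set ι}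
    (hS : ¬S.Countable) (hs : ∀ i ∈ S, (s i).encard = n) :
    ∃ R, R.Finite ∧ ∃ S' ⊆ S, ¬S'.Countable ∧ IsDeltaSystem s S' R := by
  induction n generalizing s S with
  | zero =>
    refine ⟨∅, Set.finite_empty, S, subset_rfl, hS, fun i hi j _ _ => ?_⟩
    simp only [Set.encard_eq_zero.1 (hs i hi), Set.empty_inter]
  | succ n ih =>
    by_cases hpt : ∀ p, {i ∈ S | p ∈ s i}.Countable
    · obtain ⟨S', hS'S, hS', hdisj⟩ := exists_not_countable_pairwise_disjoint hS
        (fun i hi => (Set.finite_of_encard_eq_coe (hs i hi)).countable) hpt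
      exact ⟨∅, Set.finite_empty, S', hS'S, hS', fun i hi j hj hij =>
        (hdisj hi hj hij).inter_eq⟩
    · obtain ⟨p, hp⟩ := not_forall.1 hpt
      have hcard : ∀ i ∈ {i ∈ S | p ∈ s i}, (s i \ {p}).encard = n := fun i hi => by
        rw [Set.encard_sdiff_singleton_of_mem hi.2, hs i hi.1]
        norm_cast
      obtain ⟨R, hR, S', hS'S, hS', hΔ⟩ := ih hp hcard
      exact ⟨insert p R, hR.insert p, S', hS'S.trans (Set.sep_subset _ _), hS',
        hΔ.insert_root fun i hi => (hS'S hi).2⟩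

theorem exists_isDeltaSystem {s : ι → Set α} {S : Set ι} (hS : ¬S.Countable)
    (hs : ∀ i ∈ S, (s i).Finite) :
    ∃ R, R.Finite ∧ ∃ S' ⊆ S, ¬S'.Countable ∧ IsDeltaSystem s S' R := by
  obtain ⟨n, hn⟩ := exists_not_countable_fiber hS fun i => (s i).ncard
  obtain ⟨R, hR, S', hS'S, h⟩ := exists_isDeltaSystem_of_encard_eq n hn fun i ⟨hi, hcard⟩ => by
    rw [← (hs i hi).cast_ncard_eq, hcard]
  exact ⟨R, hR, S', hS'S.trans (Set.sep_subset _ _), h⟩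

/-- The Knaster property of `Q`, with an arbitrary relation `r` in the role of compatibility. -/
def HasKnasterProperty (r : ι → ι → Prop) (Q : Set ι) : Prop :=
  ∀ S ⊆ Q, ¬S.Countable → ∃ S' ⊆ S, ¬S'.Countable ∧ ∀ i ∈ S', ∀ j ∈ S', r i j

theorem HasKnasterProperty.countable_of_pairwise_not {r : ι → ι → Prop} {Q A : Set ι}
    (h : HasKnasterProperty r Q) (hAQ : A ⊆ Q) (hA : A.Pairwise fun i j => ¬r i j) :
    A.Countable := by
  by_contra hunc
  obtain ⟨S', hS'A, hS', hr⟩ := h A hAQ hunc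
  have hsub : S'.Subsingleton := fun i hi j hj =>
    hA.eq (hS'A hi) (hS'A hj) (not_not.2 (hr i hi j hj))
  exact hS' hsub.countable

theorem hasKnasterProperty_eqOn_inter [Countable β] (s : ι → Set α) (g : ι → α → β) :
    HasKnasterProperty (fun i j => Set.EqOn (g i) (g j) (s i ∩ s j)) {i | (s i).Finite} := by
  intro S hSfin hS
  obtain ⟨R, hR, T, hTS, hT, hΔ⟩ := exists_isDeltaSystem hS hSfin
  have : Finite R := hR
  obtain ⟨φ, hφ⟩ := exists_not_countable_fiber hT fun i => R.domRestrict (g i)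
  refine ⟨_, (Set.sep_subset _ _).trans hTS, hφ, ?_⟩
  rintro i ⟨hi, hiφ⟩ j ⟨hj, hjφ⟩
  obtain rfl | hij := eq_or_ne i j
  · exact Set.eqOn_refl _ _
  · rw [hΔ hi hj hij, ← Set.domRestrict_eq_domRestrict_iff, hiφ, hjφ]

end UncountableFamilies

/- A partial function from `P` to `E` with finite domain is modelled as a
function `g : P → Option E` whose support `{p | g p ≠ none}` is finite;
its domain is its support. Conditions of `Q` are pairs `⟨f, g⟩` with
`f ∈ C` and `g` such a finite partial function. Compatibility of `q₀, q₁`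
in `Q` means the existence of `r ∈ Q` with `r ≤ q₀` and `r ≤ q₁`. -/

/-- If `C` and `E` are countable, `Q` is a partial order whose conditions
are pairs `⟨f, g⟩` of an element `f ∈ C` and a finite partial function `g`
from `P` to `E`, and any two conditions with the same first coordinate
whose second coordinates agree on the intersection of their domains are
compatible, then `Q` has the Knaster property: every uncountable subset of
`Q` has an uncountable subset of pairwise compatible conditions. In
particular `Q` has no uncountable antichain (`Q` is c.c.c.). -/
theorem knaster_of_finite_partial_functions
    {C E P : Type*} [Countable C] [Countable E]
    (Q : Set (C × (P → Option E)))
    (hfin : ∀ q ∈ Q, {p : P | q.2 p ≠ none}.Finite)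
    (le : C × (P → Option E) → C × (P → Option E) → Prop)
    (hrefl : ∀ q ∈ Q, le q q)
    (htrans : ∀ q₀ ∈ Q, ∀ q₁ ∈ Q, ∀ q₂ ∈ Q, le q₀ q₁ → le q₁ q₂ → le q₀ q₂)
    (hantisymm : ∀ q₀ ∈ Q, ∀ q₁ ∈ Q, le q₀ q₁ → le q₁ q₀ → q₀ = q₁)
    (hcompat : ∀ (f : C) (g₀ g₁ : P → Option E),
      (f, g₀) ∈ Q → (f, g₁) ∈ Q →
      (∀ p : P, g₀ p ≠ none → g₁ p ≠ none → g₀ p = g₁ p) →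
      ∃ r ∈ Q, le r (f, g₀) ∧ le r (f, g₁)) :
    (∀ S ⊆ Q, ¬S.Countable →
      ∃ S' ⊆ S, ¬S'.Countable ∧
        ∀ q₀ ∈ S', ∀ q₁ ∈ S', ∃ r ∈ Q, le r q₀ ∧ le r q₁) ∧
    (∀ A ⊆ Q, (∀ q₀ ∈ A, ∀ q₁ ∈ A, q₀ ≠ q₁ → ¬∃ r ∈ Q, le r q₀ ∧ le r q₁) →
      A.Countable) := by
  have knaster : HasKnasterProperty (fun q₀ q₁ => ∃ r ∈ Q, le r q₀ ∧ le r q₁) Q := by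
    intro S hSQ hS
    obtain ⟨f, hf⟩ := exists_not_countable_fiber hS Prod.fst
    obtain ⟨S', hS', hunc, hagree⟩ :=
      hasKnasterProperty_eqOn_inter (fun q : C × (P → Option E) => {p | q.2 p ≠ none}) Prod.snd
        {q ∈ S | q.1 = f} (fun q hq => hfin q (hSQ hq.1)) hf
    refine ⟨S', hS'.trans (Set.sep_subset _ _), hunc, ?_⟩
    rintro ⟨f₀, g₀⟩ h₀ ⟨f₁, g₁⟩ h₁
    obtain ⟨hS₀, rfl⟩ := hS' h₀
    obtain ⟨hS₁, rfl⟩ := hS' h₁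
    exact hcompat _ g₀ g₁ (hSQ hS₀) (hSQ hS₁) fun p hp₀ hp₁ => hagree _ h₀ _ h₁ ⟨hp₀, hp₁⟩
  exact ⟨knaster, fun A hAQ hA => knaster.countable_of_pairwise_not hAQ
    fun q₀ h₀ q₁ h₁ hne => hA q₀ h₀ q₁ h₁ hne⟩
end

section
/- Let P be an atomless ℵ₀-distributive partial order, let ⟨A_α : α < ω₁⟩ be a family of maximal antichains of P such that for all β < α < ω₁ every element of A_α lies strictly below exactly one element of A_β, and suppose T = ⋃_{α<ω₁} A_α is dense in P. Call a set b ⊆ T a cofinal branch of T if it is a maximal chain of (T, ≤) meeting every A_α. Then for every t ∈ T and every countable set 𝒜 of cofinal branches of T, there exists s ∈ T with s ≤ t and s ∉ ⋃𝒜 (countably many cofinal branches cannot cover the part of T below any node). -/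
/-- The underlying set `T = ⋃_{α<ω₁} A_α` of the tree of antichains. -/
def treeSet {P : Type*} (A : Ordinal → Set P) : Set P :=
  {p | ∃ α < omega1, p ∈ A α}

/-- A cofinal branch of the tree `T = ⋃_{α<ω₁} A_α`: a maximal chain of
`(T, ≤)` meeting every `A_α`. -/
def CofBranch {P : Type*} [Preorder P] (A : Ordinal → Set P) (b : Set P) :
    Prop :=
  b ⊆ treeSet A ∧ IsChain (· ≤ ·) b ∧
    (∀ c : Set P, c ⊆ treeSet A → IsChain (· ≤ ·) c → b ⊆ c → b = c) ∧
    ∀ α < omega1, (b ∩ A α).Nonempty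

section Preorder

variable {P : Type*} [Preorder P]

/-- A linked set of conditions: its members are pairwise compatible. Chains and filters are
linked. The common extension need not belong to the set. -/
def Linked (b : Set P) : Prop :=
  ∀ p ∈ b, ∀ q ∈ b, Compat p q

theorem linked_of_isChain {b : Set P} (hb : IsChain (· ≤ ·) b) : Linked b := by
  intro p hp q hq
  rcases hb.total hp hq with hpq | hqp
  · exact ⟨p, le_rfl, hpq⟩
  · exact ⟨q, hqp, le_rfl⟩

theorem Linked.linked_upperClosure {b : Set P} (hb : Linked b) :
    Linked (upperClosure b : Set P) := by
  rintro p ⟨x, hx, hxp⟩ q ⟨y, hy, hyq⟩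
  obtain ⟨r, hrx, hry⟩ := hb x hx y hy
  exact ⟨r, hrx.trans hxp, hry.trans hyq⟩

theorem fOpen_compl_upperClosure (b : Set P) : FOpen (upperClosure b : Set P)ᶜ :=
  fun _ hp _ hqp hq => hp ((upperClosure b).upper hqp hq)

theorem Linked.fDense_compl_upperClosure {b : Set P} (hb : Linked b)
    (hatomless : AtomlessOrder P) : FDense (upperClosure b : Set P)ᶜ := by
  intro p
  obtain ⟨q, r, hqp, hrp, hqr⟩ := hatomless p
  by_cases hq : q ∈ upperClosure b
  · exact ⟨r, fun hr => hqr (hb.linked_upperClosure q hq r hr), hrp⟩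
  · exact ⟨q, hq, hqp⟩

theorem Distributive.fDense_biInter (hdistr : Distributive P) {ι : Type*} {S : Set ι}
    (hS : S.Countable) {D : ι → Set P} (hopen : ∀ i ∈ S, FOpen (D i))
    (hdense : ∀ i ∈ S, FDense (D i)) : FDense (⋂ i ∈ S, D i) := by
  rcases S.eq_empty_or_nonempty with rfl | hne
  · exact fun p => ⟨p, by simp, le_rfl⟩
  · obtain ⟨f, rfl⟩ := hS.exists_eq_range hne
    rw [Set.biInter_range]
    exact hdistr _ fun n => ⟨hopen _ ⟨n, rfl⟩, hdense _ ⟨n, rfl⟩⟩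

theorem countable_branches_do_not_cover_below_general (hatomless : AtomlessOrder P)
    (hdistr : Distributive P) {T : Set P} (hdense : FDense T) {𝒜 : Set (Set P)}
    (hcount : 𝒜.Countable) (hlinked : ∀ b ∈ 𝒜, Linked b) (t : P) :
    ∃ s ∈ T, s ≤ t ∧ ∀ b ∈ 𝒜, s ∉ b := by
  obtain ⟨p, hp, hpt⟩ := hdistr.fDense_biInter hcount
    (fun b _ => fOpen_compl_upperClosure b)
    (fun b hb => (hlinked b hb).fDense_compl_upperClosure hatomless) t
  obtain ⟨s, hsT, hsp⟩ := hdense p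
  exact ⟨s, hsT, hsp.trans hpt,
    fun b hb hsb => Set.mem_iInter₂.mp hp b hb ⟨s, hsb, hsp⟩⟩

end Preorder

/-- Let `P` be an atomless ℵ₀-distributive partial order and
`⟨A_α : α < ω₁⟩` a family of maximal antichains such that for `β < α < ω₁`
every element of `A_α` lies strictly below exactly one element of `A_β`,
and suppose `T = ⋃_{α<ω₁} A_α` is dense in `P`. Then countably many
cofinal branches of `T` cannot cover the part of `T` below any node: for
every `t ∈ T` and every countable set `𝒜` of cofinal branches there is
`s ∈ T` with `s ≤ t` avoiding every branch in `𝒜`. -/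
theorem countable_branches_do_not_cover_below
    {P : Type*} [PartialOrder P]
    (hatomless : AtomlessOrder P)
    (hdistr : Distributive P)
    (A : Ordinal → Set P)
    (hmax : ∀ α < omega1, MaxAntichain (A α))
    (href : ∀ β α : Ordinal, β < α → α < omega1 →
      ∀ a ∈ A α, ∃! b, b ∈ A β ∧ a < b)
    (hdense : FDense (treeSet A)) :
    ∀ t ∈ treeSet A, ∀ 𝒜 : Set (Set P), 𝒜.Countable →
      (∀ b ∈ 𝒜, CofBranch A b) →
      ∃ s ∈ treeSet A, s ≤ t ∧ ∀ b ∈ 𝒜, s ∉ b :=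
  fun t _ _ hcount hbranch => countable_branches_do_not_cover_below_general hatomless hdistr hdense
    hcount (fun b hb => linked_of_isChain (hbranch b hb).2.1) t
end
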